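/- Let R = K[x_1,x_2,x_3,y_1,y_2,y_3] over a field K and let I = ⟨x_1x_2, x_2x_3, x_1x_3, x_1y_1, x_2y_2, x_3y_3⟩ (the edge ideal of the triangle with a whisker at each vertex). Then I^{[2]} = ⟨x_1y_1x_3y_3, x_1y_1x_2x_3, x_1y_1x_2y_2, x_3y_3x_2y_2, x_3y_3x_1x_2, x_2y_2x_1x_3⟩, both ⟨x_1,x_2⟩ and ⟨y_1,y_2,y_3⟩ are minimal primes of I^{[2]}, so I^{[2]} is not unmixed and R/I^{[2]} is not Cohen-Macaulay. -/

import Mathlib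

open MvPolynomial

/-- A simplicial complex on the vertex set `V`, presented by its set of facets
(the maximal faces).  Every facet is nonempty and no facet contains another. -/
structure SimplicialComplexOn (V : Type) [Fintype V] [DecidableEq V] : Type where
  facets : Finset (Finset V)
  nonempty_facet : ∀ F ∈ facets, F.Nonempty
  antichain : ∀ F ∈ facets, ∀ G ∈ facets, F ⊆ G → F = G

variable {V : Type} [Fintype V] [DecidableEq V]

/-- `F` is a leaf of the collection of facets `S`: either `F` is the only facet, or
there is a facet `G ≠ F` (a joint) with `F ∩ H ⊆ F ∩ G` for every facet `H ≠ F`. -/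
def IsLeafOf (S : Finset (Finset V)) (F : Finset V) : Prop :=
  F ∈ S ∧ ((∀ H ∈ S, H = F) ∨
    ∃ G ∈ S, G ≠ F ∧ ∀ H ∈ S, H ≠ F → F ∩ H ⊆ F ∩ G)

/-- The forest property for a facet collection: every nonempty subcollection
(i.e. every nonempty subcomplex) has a leaf. -/
def HasLeafProp (S : Finset (Finset V)) : Prop :=
  ∀ T ⊆ S, T.Nonempty → ∃ F, IsLeafOf T F

/-- A good leaf: a facet which is a leaf of every subcomplex containing it. -/
def IsGoodLeafOf (S : Finset (Finset V)) (F : Finset V) : Prop :=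
  F ∈ S ∧ ∀ T ⊆ S, F ∈ T → IsLeafOf T F

/-- A special leaf: a leaf `F` such that for all facets `H, H' ≠ F`,
`H ∩ H' ≠ ∅` iff `(H ∩ H') \ F ≠ ∅`. -/
def IsSpecialLeafOf (S : Finset (Finset V)) (F : Finset V) : Prop :=
  IsLeafOf S F ∧ ∀ H ∈ S, ∀ H' ∈ S, H ≠ F → H' ≠ F →
    ((H ∩ H').Nonempty ↔ ((H ∩ H') \ F).Nonempty)

/-- A matching: a subcollection of the facets that is pairwise disjoint. -/
def IsMatchingOf (S : Finset (Finset V)) (M : Finset (Finset V)) : Prop :=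
  M ⊆ S ∧ ∀ F ∈ M, ∀ G ∈ M, F ≠ G → F ∩ G = ∅

/-- The matching number: maximum size of a matching. -/
noncomputable def matchingNumberOf (S : Finset (Finset V)) : ℕ :=
  sSup {n | ∃ M : Finset (Finset V), IsMatchingOf S M ∧ M.card = n}

/-- The facet collection `S` is grafted: it decomposes as `Fs ∪ Gs` where
(1) every vertex of a `G ∈ Gs` lies in some `F ∈ Fs`, (2) `Fs` is exactly the set
of leaves of `S`, (3) `Fs` and `Gs` are disjoint, (4) the members of `Fs` are
pairwise disjoint, and (5) for each `G ∈ Gs`, deleting the facet `G` leaves a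
grafted collection. -/
inductive IsGrafted : Finset (Finset V) → Prop where
  | intro (S Fs Gs : Finset (Finset V))
      (hunion : S = Fs ∪ Gs)
      (hdisj : Disjoint Fs Gs)
      (hcover : ∀ G ∈ Gs, ∀ v ∈ G, ∃ F ∈ Fs, v ∈ F)
      (hleaves : ∀ F, IsLeafOf S F ↔ F ∈ Fs)
      (hFdisj : ∀ F ∈ Fs, ∀ F' ∈ Fs, F ≠ F' → F ∩ F' = ∅)
      (hrec : ∀ G ∈ Gs, IsGrafted (S.erase G)) :
      IsGrafted S

/-- `S` is the (minimal presentation of the) grafting of the collection `Gs`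
with the simplices `Fs`. -/
def IsGraftingDecomp (S Fs Gs : Finset (Finset V)) : Prop :=
  S = Fs ∪ Gs ∧ Disjoint Fs Gs ∧
  (∀ G ∈ Gs, ∀ v ∈ G, ∃ F ∈ Fs, v ∈ F) ∧
  (∀ F, IsLeafOf S F ↔ F ∈ Fs) ∧
  (∀ F ∈ Fs, ∀ F' ∈ Fs, F ≠ F' → F ∩ F' = ∅) ∧
  (∀ G ∈ Gs, IsGrafted (S.erase G))

/-- A Cohen-Macaulay simplicial forest, combinatorially: a grafted simplicial forest. -/
def IsCMForestFacets (S : Finset (Finset V)) : Prop :=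
  HasLeafProp S ∧ IsGrafted S

/-- The closed neighborhood `N[F] = {F} ∪ {G ∈ S : G ≠ F, G ∩ F ≠ ∅}`. -/
def closedNbhd (S : Finset (Finset V)) (F : Finset V) : Finset (Finset V) :=
  insert F (S.filter fun G => G ≠ F ∧ (G ∩ F).Nonempty)

/-- The contraction of the facet collection `S` on `A`: the minimal members of
`{F \ A : F ∈ S}`. -/
def contraction (S : Finset (Finset V)) (A : Finset V) : Finset (Finset V) :=
  (S.image fun F => F \ A).filter fun F' => ∀ G ∈ S, G \ A ⊆ F' → G \ A = F'

variable (K : Type) [Field K]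

/-- The square-free monomial `x_S = ∏_{v ∈ S} x_v`. -/
noncomputable def xMon (S : Finset V) : MvPolynomial V K := ∏ v ∈ S, X v

/-- The facet ideal `I(Δ) = ⟨x_F : F a facet⟩`. -/
noncomputable def facetIdealOf (S : Finset (Finset V)) : Ideal (MvPolynomial V K) :=
  Ideal.span { p | ∃ F ∈ S, p = xMon K F }

/-- The `k`-th square-free power of an ideal: the ideal generated by all
square-free monomials lying in `I ^ k`. -/
noncomputable def sqfreePow (I : Ideal (MvPolynomial V K)) (k : ℕ) :
    Ideal (MvPolynomial V K) :=
  Ideal.span { p | (∃ S : Finset V, p = xMon K S) ∧ p ∈ I ^ k }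

/-- The depth of `R/I` with respect to the homogeneous maximal ideal
`m = ⟨x_v : v ∈ V⟩`: the largest length of an `R/I`-regular sequence of
elements of `m`. -/
noncomputable def gradedDepth (I : Ideal (MvPolynomial V K)) : ℕ :=
  sSup {n | ∃ rs : List (MvPolynomial V K), rs.length = n ∧
    (∀ r ∈ rs, r ∈ Ideal.span (Set.range (X : V → MvPolynomial V K))) ∧
    RingTheory.Sequence.IsRegular (MvPolynomial V K ⧸ I) rs}

/-- `R/I` is Cohen-Macaulay: its depth equals its Krull dimension. -/
def IsCMQuot (I : Ideal (MvPolynomial V K)) : Prop :=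
  ((gradedDepth K I : ℕ∞) : WithBot ℕ∞) = ringKrullDim (MvPolynomial V K ⧸ I)

section Statements

variable {V : Type} [Fintype V] [DecidableEq V] (K : Type) [Field K]

/-- An ideal is unmixed if all its minimal primes have the same height. -/
def Unmixed {R : Type*} [CommRing R] (I : Ideal R) : Prop :=
  ∀ p q : PrimeSpectrum R, p.asIdeal ∈ I.minimalPrimes → q.asIdeal ∈ I.minimalPrimes →
    Order.height p = Order.height q

namespace Aux18

/-- Depth is bounded by the dimension of any cyclic submodule supported at the maximal ideal. -/
lemma length_le_dim {R : Type*} [CommRing R] [IsNoetherianRing R] (m : Ideal R) [m.IsMaximal]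
    (rs : List R) : ∀ (M : Type _) [AddCommGroup M] [Module R M] [Module.Finite R M],
    (∀ r ∈ rs, r ∈ m) → RingTheory.Sequence.IsWeaklyRegular M rs → ∀ (x : M) (A : Ideal R),
    A ≤ m → (∀ a, a ∈ A ↔ a • x = 0) →
    ((rs.length : ℕ∞) : WithBot ℕ∞) ≤ ringKrullDim (R ⧸ A) := by
  induction rs with
  | nil =>
    intro M _ _ _ _ _ x A hA _
    have : Nontrivial (R ⧸ A) := Ideal.Quotient.nontrivial_iff.2 (fun h => by
      subst h
      exact Ideal.IsPrime.ne_top (I := m) inferInstance (top_le_iff.1 hA))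
    simpa using ringKrullDim_nonneg_of_nontrivial
  | cons r rs ih =>
    intro M _ _ _ hm hreg x A hA hx
    rw [RingTheory.Sequence.isWeaklyRegular_cons_iff] at hreg
    obtain ⟨hr, hreg⟩ := hreg
    have hrm : r ∈ m := hm r (by simp)
    -- the submodule killed by A
    let N : Submodule R M :=
      { carrier := {n | ∀ a ∈ A, a • n = 0}
        add_mem' := fun {u v} hu hv a ha => by rw [smul_add, hu a ha, hv a ha, add_zero]
        zero_mem' := fun a _ => smul_zero a
        smul_mem' := fun c u hu a ha => by rw [smul_comm, hu a ha, smul_zero] }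
    have hxN : x ∈ N := fun a ha => (hx a).1 ha
    have key : ∃ y ∈ N, ∀ a, (∃ z : M, a • y = r • z) → a ∈ m := by
      by_contra hcon
      push Not at hcon
      have hle : N ≤ m • N := by
        intro y hy
        obtain ⟨a, ⟨z, hz⟩, ham⟩ := hcon y hy
        have hzN : z ∈ N := by
          intro b hb
          apply hr
          change r • (b • z) = r • (0 : M)
          rw [smul_comm, ← hz, smul_comm, hy b hb, smul_zero, smul_zero]
        obtain ⟨b, hb⟩ := Ideal.IsMaximal.exists_inv (I := m) inferInstance ham
        obtain ⟨c, hc, hbc⟩ := hb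
        have : y = b • (r • z) + c • y := by
          rw [← hz, smul_smul, ← add_smul, hbc, one_smul]
        rw [this]
        refine Submodule.add_mem _ (Submodule.smul_mem _ _ (Submodule.smul_mem_smul hrm hzN))
          (Submodule.smul_mem_smul hc hy)
      obtain ⟨c, hc, hcN⟩ := Submodule.exists_sub_one_mem_and_smul_eq_zero_of_fg_of_le_smul m N
        (IsNoetherian.noetherian N) hle
      have hcm : c ∈ m := hA ((hx c).2 (hcN x hxN))
      apply Ideal.IsPrime.ne_top (I := m) inferInstance
      rw [Ideal.eq_top_iff_one]
      have := m.sub_mem hcm hc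
      simpa using this
    obtain ⟨y, hyN, hy⟩ := key
    let yb : QuotSMulTop r M := Submodule.Quotient.mk y
    let B : Ideal R := LinearMap.ker (LinearMap.toSpanSingleton R (QuotSMulTop r M) yb)
    have hB : ∀ a, a ∈ B ↔ a • yb = 0 := fun a => by simp [B]
    have hB' : ∀ a, a ∈ B ↔ ∃ z : M, a • y = r • z := fun a => by
      rw [hB]
      change (Submodule.Quotient.mk (a • y) : QuotSMulTop r M) = 0 ↔ _
      rw [Submodule.Quotient.mk_eq_zero, Submodule.mem_smul_pointwise_iff_exists]
      simp [eq_comm]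
    have h1 := ih (QuotSMulTop r M) (fun s hs => hm s (by simp [hs])) hreg yb B
      (fun a ha => hy a ((hB' a).1 ha)) hB
    have hAB : A ≤ B := fun a ha => (hB' a).2 ⟨0, by rw [hyN a ha, smul_zero]⟩
    have hrB : r ∈ B := (hB' r).2 ⟨y, rfl⟩
    have hnzd : Ideal.Quotient.mk A r ∈ nonZeroDivisors (R ⧸ A) := by
      rw [mem_nonZeroDivisors_iff_right]
      intro u hu
      obtain ⟨u, rfl⟩ := Ideal.Quotient.mk_surjective u
      rw [← map_mul, Ideal.Quotient.eq_zero_iff_mem, hx] at hu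
      rw [Ideal.Quotient.eq_zero_iff_mem, hx]
      apply hr
      change r • (u • x) = r • (0 : M)
      rw [smul_zero, smul_smul, mul_comm, hu]
    have h2 := ringKrullDim_quotient_succ_le_of_nonZeroDivisor hnzd
    let f : (R ⧸ A) ⧸ Ideal.span {Ideal.Quotient.mk A r} →+* R ⧸ B :=
      Ideal.Quotient.lift _ (Ideal.Quotient.factor hAB) (fun a ha => by
        have : Ideal.span {Ideal.Quotient.mk A r} ≤ RingHom.ker (Ideal.Quotient.factor hAB) := by
          rw [Ideal.span_singleton_le_iff_mem, RingHom.mem_ker]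
          simpa [Ideal.Quotient.eq_zero_iff_mem] using hrB
        exact this ha)
    have hf : Function.Surjective f := by
      intro b
      obtain ⟨b, rfl⟩ := Ideal.Quotient.mk_surjective b
      exact ⟨Ideal.Quotient.mk _ (Ideal.Quotient.mk _ b), rfl⟩
    have h3 := ringKrullDim_le_of_surjective f hf
    refine le_trans ?_ h2
    have h4 := h1.trans h3
    calc (((r :: rs).length : ℕ∞) : WithBot ℕ∞) = ((rs.length : ℕ∞) : WithBot ℕ∞) + 1 := by
          simp
      _ ≤ _ := by gcongr

variable (F : Type) [Field F]

/-- Ideals generated by sets of variables are prime, and membership of variables. -/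
lemma isPrime_vars (s : Set (Fin 6)) :
    (Ideal.span (X '' s : Set (MvPolynomial (Fin 6) F))).IsPrime := by
  classical
  let φ : MvPolynomial (Fin 6) F →ₐ[F] MvPolynomial (Fin 6) F :=
    aeval (fun i => if i ∈ s then 0 else X i)
  have h : Ideal.span (X '' s : Set (MvPolynomial (Fin 6) F)) = RingHom.ker φ := by
    apply le_antisymm
    · rw [Ideal.span_le]
      rintro _ ⟨i, hi, rfl⟩
      simp [φ, hi]
    · intro p hp
      have hc : (Ideal.Quotient.mkₐ F (Ideal.span (X '' s : Set (MvPolynomial (Fin 6) F)))).comp φ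
          = Ideal.Quotient.mkₐ F _ := by
        apply MvPolynomial.algHom_ext
        intro i
        by_cases hi : i ∈ s
        · simp only [AlgHom.comp_apply, φ, aeval_X, hi, if_true, map_zero]
          symm
          rw [Ideal.Quotient.mkₐ_eq_mk, Ideal.Quotient.eq_zero_iff_mem]
          exact Ideal.subset_span ⟨i, hi, rfl⟩
        · simp [φ, hi]
      have h2 := DFunLike.congr_fun hc p
      rw [AlgHom.comp_apply, (RingHom.mem_ker).1 hp, map_zero] at h2
      rw [← Ideal.Quotient.eq_zero_iff_mem]
      exact h2.symm
  rw [h]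
  exact RingHom.ker_isPrime _

lemma X_mem_vars (s : Set (Fin 6)) (i : Fin 6) :
    (X i : MvPolynomial (Fin 6) F) ∈ Ideal.span (X '' s : Set (MvPolynomial (Fin 6) F)) ↔
      i ∈ s := by
  constructor
  · intro h
    rw [mem_ideal_span_X_image] at h
    obtain ⟨j, hj, hne⟩ := h (Finsupp.single i 1) (by simp [X])
    have : j = i := by
      by_contra hji
      simp [Ne.symm hji] at hne
    exact this ▸ hj
  · intro h
    exact Ideal.subset_span ⟨i, h, rfl⟩

/-- The edges. -/
def ed : Fin 6 → Finset (Fin 6) := ![{0, 1}, {1, 2}, {0, 2}, {0, 3}, {1, 4}, {2, 5}]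

/-- The matchings of size two. -/
def ma : Fin 6 → Finset (Fin 6) :=
  ![{0, 3, 2, 5}, {0, 3, 1, 2}, {0, 3, 1, 4}, {2, 5, 1, 4}, {2, 5, 0, 1}, {1, 4, 0, 2}]

/-- The claimed square-free power. -/
noncomputable def J : Ideal (MvPolynomial (Fin 6) F) :=
  Ideal.span {X 0 * X 3 * (X 2 * X 5), X 0 * X 3 * (X 1 * X 2),
        X 0 * X 3 * (X 1 * X 4), X 2 * X 5 * (X 1 * X 4), X 2 * X 5 * (X 0 * X 1),
        X 1 * X 4 * (X 0 * X 2)}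

lemma J_eq : J F = Ideal.span (Set.range fun k => xMon F (ma k)) := by
  rw [J]
  congr 1
  ext p
  simp [Fin.exists_fin_succ, ma, xMon, mul_assoc, eq_comm]

lemma I_eq : (Ideal.span {X 0 * X 1, X 1 * X 2, X 0 * X 2,
        X 0 * X 3, X 1 * X 4, X 2 * X 5} : Ideal (MvPolynomial (Fin 6) F))
    = Ideal.span (Set.range fun k => xMon F (ed k)) := by
  congr 1
  ext p
  simp [Fin.exists_fin_succ, ed, xMon, eq_comm]

/-- Exponent of a square-free monomial. -/
noncomputable def ex (S : Finset (Fin 6)) : Fin 6 →₀ ℕ := ∑ v ∈ S, Finsupp.single v 1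

lemma ex_apply (S : Finset (Fin 6)) (v : Fin 6) : ex S v = if v ∈ S then 1 else 0 := by
  simp [ex, Finsupp.finsetSum_apply, Finsupp.single_apply]

lemma xMon_eq (S : Finset (Fin 6)) : xMon F S = monomial (ex S) 1 := by
  rw [xMon, ex, monomial_sum_one]
  rfl

lemma ed_ma : ∀ i j, Disjoint (ed i) (ed j) → ∃ k, ma k = ed i ∪ ed j := by
  decide

lemma ma_ed : ∀ k, ∃ i j, Disjoint (ed i) (ed j) ∧ ma k = ed i ∪ ed j := by
  decide

lemma sq_eq : sqfreePow F (Ideal.span (Set.range fun k => xMon F (ed k))) 2 = J F := by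
  rw [J_eq]
  apply le_antisymm
  · rw [sqfreePow, Ideal.span_le]
    rintro _ ⟨⟨S, rfl⟩, hS⟩
    have hsq : (Ideal.span (Set.range fun k => xMon F (ed k))) ^ 2 =
        Ideal.span ((fun s => monomial s (1 : F)) ''
          (Set.range fun ij : Fin 6 × Fin 6 => ex (ed ij.1) + ex (ed ij.2))) := by
      rw [sq, Ideal.span_mul_span']
      congr 1
      ext p
      simp only [Set.mem_mul, Set.mem_range, Set.mem_image, exists_exists_eq_and, Prod.exists,
        xMon_eq, monomial_mul, one_mul]
      constructor
      · rintro ⟨a, b, h⟩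
        exact ⟨_, ⟨a, b, rfl⟩, h⟩
      · rintro ⟨_, ⟨a, b, rfl⟩, h⟩
        exact ⟨a, b, h⟩
    rw [hsq, mem_ideal_span_monomial_image] at hS
    obtain ⟨_, ⟨⟨i, j⟩, rfl⟩, hle⟩ := hS (ex S) (by rw [xMon_eq]; simp)
    have hv : ∀ v, (if v ∈ ed i then 1 else 0) + (if v ∈ ed j then 1 else 0)
        ≤ if v ∈ S then 1 else 0 := fun v => by
      have := hle v
      simpa [ex_apply] using this
    have hd : Disjoint (ed i) (ed j) := by
      rw [Finset.disjoint_left]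
      intro v h1 h2
      have := hv v
      simp only [h1, h2, if_true] at this
      split_ifs at this <;> omega
    obtain ⟨k, hk⟩ := ed_ma i j hd
    have hsub : ma k ⊆ S := by
      rw [hk]
      intro v h
      by_contra hn
      have := hv v
      rw [if_neg hn] at this
      rcases Finset.mem_union.1 h with h | h <;> simp [h] at this
    exact Ideal.mem_of_dvd _ (Finset.prod_dvd_prod_of_subset _ _ _ hsub)
      (Ideal.subset_span ⟨k, rfl⟩)
  · rw [Ideal.span_le]
    rintro _ ⟨k, rfl⟩
    refine Ideal.subset_span ⟨⟨_, rfl⟩, ?_⟩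
    obtain ⟨i, j, hd, hk⟩ := ma_ed k
    have : xMon F (ma k) = xMon F (ed i) * xMon F (ed j) := by
      rw [hk, xMon, Finset.prod_union hd]; rfl
    simp only [this, sq]
    exact Ideal.mul_mem_mul (Ideal.subset_span ⟨i, rfl⟩) (Ideal.subset_span ⟨j, rfl⟩)

lemma P_eq : Ideal.span {(X 0 : MvPolynomial (Fin 6) F), X 1} =
    Ideal.span (X '' ({0, 1} : Set (Fin 6))) := by
  simp [Set.image_insert_eq]

lemma Q_eq : Ideal.span {(X 3 : MvPolynomial (Fin 6) F), X 4, X 5} =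
    Ideal.span (X '' ({3, 4, 5} : Set (Fin 6))) := by
  simp [Set.image_insert_eq]

lemma J_le_iff (p : Ideal (MvPolynomial (Fin 6) F)) [p.IsPrime] : J F ≤ p ↔
    (X 0 * X 3 * (X 2 * X 5) ∈ p ∧ X 0 * X 3 * (X 1 * X 2) ∈ p ∧
        X 0 * X 3 * (X 1 * X 4) ∈ p ∧ X 2 * X 5 * (X 1 * X 4) ∈ p ∧ X 2 * X 5 * (X 0 * X 1) ∈ p ∧
        X 1 * X 4 * (X 0 * X 2) ∈ p) := by
  rw [J, Ideal.span_le]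
  simp [Set.insert_subset_iff]

lemma J_le_vars (s : Set (Fin 6)) : J F ≤ Ideal.span (X '' s) ↔
    (((0 ∈ s ∨ 3 ∈ s) ∨ (2 ∈ s ∨ 5 ∈ s)) ∧ ((0 ∈ s ∨ 3 ∈ s) ∨ (1 ∈ s ∨ 2 ∈ s)) ∧
     ((0 ∈ s ∨ 3 ∈ s) ∨ (1 ∈ s ∨ 4 ∈ s)) ∧ ((2 ∈ s ∨ 5 ∈ s) ∨ (1 ∈ s ∨ 4 ∈ s)) ∧
     ((2 ∈ s ∨ 5 ∈ s) ∨ (0 ∈ s ∨ 1 ∈ s)) ∧ ((1 ∈ s ∨ 4 ∈ s) ∨ (0 ∈ s ∨ 2 ∈ s))) := by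
  have := isPrime_vars F s
  rw [J_le_iff]
  simp only [this.mul_mem_iff_mem_or_mem, X_mem_vars]

lemma P_min : Ideal.span {(X 0 : MvPolynomial (Fin 6) F), X 1} ∈ (J F).minimalPrimes := by
  rw [P_eq]
  refine ⟨⟨isPrime_vars F _, (J_le_vars F _).2 (by simp)⟩, ?_⟩
  rintro q ⟨hq, hJ⟩ hle
  rw [J_le_iff] at hJ
  simp only [hq.mul_mem_iff_mem_or_mem] at hJ
  have h2 : X 2 ∉ q := fun h => by simpa [X_mem_vars] using hle h
  have h3 : X 3 ∉ q := fun h => by simpa [X_mem_vars] using hle h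
  have h4 : X 4 ∉ q := fun h => by simpa [X_mem_vars] using hle h
  have h5 : X 5 ∉ q := fun h => by simpa [X_mem_vars] using hle h
  simp only [h2, h3, h4, h5, false_or, or_false] at hJ
  have h0 : X 0 ∈ q := hJ.1
  have h1 : X 1 ∈ q := hJ.2.2.2.1
  rw [Ideal.span_le]
  rintro _ ⟨i, hi, rfl⟩
  rcases hi with rfl | rfl <;> assumption

lemma Q_min : Ideal.span {(X 3 : MvPolynomial (Fin 6) F), X 4, X 5} ∈ (J F).minimalPrimes := by
  rw [Q_eq]
  refine ⟨⟨isPrime_vars F _, (J_le_vars F _).2 (by simp)⟩, ?_⟩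
  rintro q ⟨hq, hJ⟩ hle
  rw [J_le_iff] at hJ
  simp only [hq.mul_mem_iff_mem_or_mem] at hJ
  have h0 : X 0 ∉ q := fun h => by simpa [X_mem_vars] using hle h
  have h1 : X 1 ∉ q := fun h => by simpa [X_mem_vars] using hle h
  have h2 : X 2 ∉ q := fun h => by simpa [X_mem_vars] using hle h
  simp only [h0, h1, h2, false_or, or_false] at hJ
  have h3 : X 3 ∈ q := hJ.2.1
  have h4 : X 4 ∈ q := hJ.2.2.2.2.2
  have h5 : X 5 ∈ q := hJ.2.2.2.2.1
  rw [Ideal.span_le]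
  rintro _ ⟨i, hi, rfl⟩
  rcases hi with rfl | rfl | rfl <;> assumption

lemma P_height : (Ideal.span {(X 0 : MvPolynomial (Fin 6) F), X 1}).height ≤ 2 := by
  classical
  have hp : (Ideal.span {(X 0 : MvPolynomial (Fin 6) F), X 1}).IsPrime := by
    rw [P_eq]; exact isPrime_vars F _
  refine (Ideal.height_le_spanFinrank _ hp.ne_top).trans ?_
  refine (Submodule.spanFinrank_span_le_encard _).trans ?_
  refine (Set.encard_insert_le _ _).trans ?_
  rw [Set.encard_singleton]
  norm_num

lemma vars_height_step (s t : Set (Fin 6)) (i : Fin 6) (hst : s ⊆ t) (hi : i ∈ t) (hn : i ∉ s) :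
    (Ideal.span (X '' s : Set (MvPolynomial (Fin 6) F))).height + 1 ≤
      (Ideal.span (X '' t : Set (MvPolynomial (Fin 6) F))).height := by
  have := isPrime_vars F s
  have := isPrime_vars F t
  apply Ideal.height_add_one_le_of_lt_of_isPrime
  refine lt_of_le_of_ne (Ideal.span_mono (Set.image_mono hst)) (fun h => ?_)
  exact hn ((X_mem_vars F s i).1 (h ▸ (X_mem_vars F t i).2 hi))

lemma Q_height : 3 ≤ (Ideal.span {(X 3 : MvPolynomial (Fin 6) F), X 4, X 5}).height := by
  rw [Q_eq]
  have h1 := vars_height_step F ∅ {3} 3 (by simp) (by simp) (by simp)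
  have h2 := vars_height_step F {3} {3, 4} 4 (by simp) (by simp) (by simp)
  have h3 := vars_height_step F {3, 4} {3, 4, 5} 5 (by intro; simp; tauto) (by simp) (by simp)
  calc (3 : ℕ∞) = 0 + 1 + 1 + 1 := by norm_num
    _ ≤ _ := by
      refine le_trans ?_ h3
      gcongr
      refine le_trans ?_ h2
      gcongr
      refine le_trans ?_ h1
      gcongr
      exact zero_le

lemma not_unmixed : ¬ Unmixed (J F) := by
  intro h
  have hP := P_min F
  have hQ := Q_min F
  have := h ⟨_, hP.1.1⟩ ⟨_, hQ.1.1⟩ hP hQ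
  rw [← PrimeSpectrum.height_eq_orderHeight, ← PrimeSpectrum.height_eq_orderHeight] at this
  have h1 := P_height F
  have h2 := Q_height F
  simp only at this
  rw [← this] at h2
  have := h2.trans h1
  exact absurd this (by decide)

lemma dim_ge : 4 ≤ ringKrullDim (MvPolynomial (Fin 6) F ⧸ J F) := by
  let g : MvPolynomial (Fin 6) F →ₐ[F] MvPolynomial (Fin 4) F :=
    aeval ![0, 0, X 0, X 1, X 2, X 3]
  have hJ : ∀ a ∈ J F, g a = 0 := by
    have : J F ≤ RingHom.ker g := by
      have hp : (RingHom.ker g).IsPrime := RingHom.ker_isPrime _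
      rw [J_le_iff]
      simp [RingHom.mem_ker, g]
    exact fun a ha => this ha
  let f := Ideal.Quotient.lift (J F) g.toRingHom hJ
  have hf : Function.Surjective f := by
    intro b
    let k : MvPolynomial (Fin 4) F →ₐ[F] MvPolynomial (Fin 6) F := aeval ![X 2, X 3, X 4, X 5]
    have hgk : g.comp k = AlgHom.id F _ := by
      apply MvPolynomial.algHom_ext
      intro i
      fin_cases i <;> simp [g, k]
    exact ⟨Ideal.Quotient.mk _ (k b), DFunLike.congr_fun hgk b⟩
  refine le_trans ?_ (ringKrullDim_le_of_surjective f hf)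
  rw [MvPolynomial.ringKrullDim_of_isNoetherianRing]
  simp

lemma dim_le (A : Ideal (MvPolynomial (Fin 6) F)) (h3 : X 3 ∈ A) (h4 : X 4 ∈ A) (h5 : X 5 ∈ A) :
    ringKrullDim (MvPolynomial (Fin 6) F ⧸ A) ≤ 3 := by
  let g : MvPolynomial (Fin 6) F →ₐ[F] MvPolynomial (Fin 3) F :=
    aeval ![X 0, X 1, X 2, 0, 0, 0]
  let f : MvPolynomial (Fin 3) F →ₐ[F] MvPolynomial (Fin 6) F ⧸ A :=
    aeval ![Ideal.Quotient.mk A (X 0), Ideal.Quotient.mk A (X 1), Ideal.Quotient.mk A (X 2)]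
  have hfg : f.comp g = Ideal.Quotient.mkₐ F A := by
    rw [← Ideal.Quotient.eq_zero_iff_mem] at h3 h4 h5
    apply MvPolynomial.algHom_ext
    intro i
    fin_cases i <;> simp [g, f, h3, h4, h5]
  have hf : Function.Surjective f := by
    intro b
    obtain ⟨b, rfl⟩ := Ideal.Quotient.mk_surjective b
    exact ⟨g b, DFunLike.congr_fun hfg b⟩
  refine le_trans (ringKrullDim_le_of_surjective f.toRingHom hf) ?_
  rw [MvPolynomial.ringKrullDim_of_isNoetherianRing]
  simp

lemma maximal_m : (Ideal.span (Set.range (X : Fin 6 → MvPolynomial (Fin 6) F))).IsMaximal := by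
  let φ : MvPolynomial (Fin 6) F →ₐ[F] F := aeval (fun _ => 0)
  have h : Ideal.span (Set.range (X : Fin 6 → MvPolynomial (Fin 6) F)) = RingHom.ker φ := by
    apply le_antisymm
    · rw [Ideal.span_le]
      rintro _ ⟨i, rfl⟩
      simp [φ]
    · intro p hp
      let m := Ideal.span (Set.range (X : Fin 6 → MvPolynomial (Fin 6) F))
      have hc : (Algebra.ofId F (MvPolynomial (Fin 6) F ⧸ m)).comp φ
          = Ideal.Quotient.mkₐ F m := by
        apply MvPolynomial.algHom_ext
        intro i
        simp only [AlgHom.comp_apply, φ, aeval_X, map_zero]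
        symm
        rw [Ideal.Quotient.mkₐ_eq_mk, Ideal.Quotient.eq_zero_iff_mem]
        exact Ideal.subset_span ⟨i, rfl⟩
      have h2 := DFunLike.congr_fun hc p
      rw [AlgHom.comp_apply, (RingHom.mem_ker).1 hp, map_zero] at h2
      change p ∈ m
      rw [← Ideal.Quotient.eq_zero_iff_mem]
      exact h2.symm
  rw [h]
  exact RingHom.ker_isMaximal_of_surjective φ (fun c => ⟨C c, by simp [φ]⟩)

lemma depth_le : gradedDepth F (J F) ≤ 3 := by
  apply csSup_le'
  rintro n ⟨rs, rfl, hm, hreg⟩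
  have := maximal_m F
  let x : MvPolynomial (Fin 6) F ⧸ J F := Ideal.Quotient.mk _ (X 0 * X 1 * X 2)
  let A : Ideal (MvPolynomial (Fin 6) F) := LinearMap.ker (LinearMap.toSpanSingleton _ _ x)
  have hA : ∀ a, a ∈ A ↔ a • x = 0 := fun a => by simp [A]
  have hA' : ∀ a, a ∈ A ↔ a * (X 0 * X 1 * X 2) ∈ J F := fun a => by
    rw [hA, ← Ideal.Quotient.eq_zero_iff_mem]
    rfl
  have hAm : A ≤ Ideal.span (Set.range X) := by
    intro a ha
    rw [hA'] at ha
    have hp := isPrime_vars F {3, 4, 5}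
    have h := (J_le_vars F {3, 4, 5}).2 (by simp) ha
    simp only [hp.mul_mem_iff_mem_or_mem, X_mem_vars] at h
    have h : a ∈ Ideal.span (X '' ({3, 4, 5} : Set (Fin 6))) := by simpa using h
    exact Ideal.span_mono (Set.image_subset_range _ _) h
  have h1 := length_le_dim _ rs _ hm hreg.toIsWeaklyRegular x A hAm hA
  have h2 := h1.trans (dim_le F A
    ((hA' _).2 (Ideal.subset_span (by right; left; ring)))
    ((hA' _).2 (Ideal.subset_span (by right; right; right; right; right; simp; ring)))
    ((hA' _).2 (Ideal.subset_span (by right; right; right; right; left; ring))))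
  have h3 : ((rs.length : ℕ∞) : WithBot ℕ∞) ≤ (((3 : ℕ) : ℕ∞) : WithBot ℕ∞) := h2
  rw [WithBot.coe_le_coe] at h3
  exact_mod_cast h3

lemma not_cm : ¬ IsCMQuot F (J F) := by
  intro h
  rw [IsCMQuot] at h
  have h1 := dim_ge F
  rw [← h] at h1
  have h2 := depth_le F
  have h3 : 4 ≤ gradedDepth F (J F) := by
    have h4 : (((4 : ℕ) : ℕ∞) : WithBot ℕ∞) ≤ ((gradedDepth F (J F) : ℕ∞) : WithBot ℕ∞) := h1
    rw [WithBot.coe_le_coe] at h4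
    exact_mod_cast h4
  omega

end Aux18

theorem stmt18 (I : Ideal (MvPolynomial (Fin 6) K))
    (hI : I = Ideal.span {X 0 * X 1, X 1 * X 2, X 0 * X 2,
        X 0 * X 3, X 1 * X 4, X 2 * X 5}) :
    sqfreePow K I 2 = Ideal.span {X 0 * X 3 * (X 2 * X 5), X 0 * X 3 * (X 1 * X 2),
        X 0 * X 3 * (X 1 * X 4), X 2 * X 5 * (X 1 * X 4), X 2 * X 5 * (X 0 * X 1),
        X 1 * X 4 * (X 0 * X 2)} ∧
    Ideal.span {(X 0 : MvPolynomial (Fin 6) K), X 1} ∈ (sqfreePow K I 2).minimalPrimes ∧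
    Ideal.span {(X 3 : MvPolynomial (Fin 6) K), X 4, X 5} ∈ (sqfreePow K I 2).minimalPrimes ∧
    ¬ Unmixed (sqfreePow K I 2) ∧
    ¬ IsCMQuot K (sqfreePow K I 2) := by
  have h : sqfreePow K I 2 = Aux18.J K := by
    rw [hI, Aux18.I_eq, Aux18.sq_eq]
  rw [h]
  exact ⟨rfl, Aux18.P_min K, Aux18.Q_min K, Aux18.not_unmixed K, Aux18.not_cm K⟩

end Statements
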